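/- There exists a universal constant C > 0 such that the following holds. Let G be a finite connected simple graph with n vertices, maximum degree at most 3 (as is the case for the dual graph of a triangulation), and diameter d ≥ 1, and let w be a walk on G following the LFV-e policy. Then every vertex of G has latency at most C·n·d under w: for every vertex v of G and every time t ∈ ℕ there exists t' with t ≤ t' ≤ t + C·n·d such that w(t') = v. -/

import Mathlib

open Classical in
/-- traversal count of the edge `e` up to time `t` -/
noncomputable def lfvCnt {V : Type} (w : ℕ → V) (e : Sym2 V) (t : ℕ) : ℕ :=
  ∑ i ∈ Finset.range t, if s(w i, w (i + 1)) = e then 1 else 0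

open Classical in
theorem lfvCnt_succ {V : Type} (w : ℕ → V) (e : Sym2 V) (t : ℕ) :
    lfvCnt w e (t + 1) = lfvCnt w e t + if s(w t, w (t + 1)) = e then 1 else 0 := by
  rw [lfvCnt, Finset.sum_range_succ, lfvCnt]

theorem lfvCnt_ncard {V : Type} (w : ℕ → V) (e : Sym2 V) (t : ℕ) :
    {t' : ℕ | t' < t ∧ s(w t', w (t' + 1)) = e}.ncard = lfvCnt w e t := by
  classical
  rw [lfvCnt, Finset.sum_boole, ← Set.ncard_coe_finset]
  simp

open Classical in
/-- residual capacity of vertex `x` at level `k` -/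
noncomputable def lfvRes {V : Type} [Fintype V] (G : SimpleGraph V) (w : ℕ → V) (k : ℕ) (x : V)
    (t : ℕ) : ℕ :=
  ∑ y : V, if G.Adj x y then k - lfvCnt w s(x, y) t else 0

open Classical in
theorem lfvRes_low {V : Type} [Fintype V] (G : SimpleGraph V) (w : ℕ → V) (k : ℕ) (t : ℕ)
    (hw : G.Adj (w t) (w (t + 1))) (hl : lfvCnt w s(w t, w (t + 1)) t < k) (x : V) :
    lfvRes G w k x t = lfvRes G w k x (t + 1) + (if x = w t then 1 else 0)
      + (if x = w (t + 1) then 1 else 0) := by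
  have h1 : (if x = w t then 1 else 0) =
      ∑ y : V, if x = w t ∧ y = w (t + 1) then 1 else 0 := by
    by_cases h : x = w t <;> simp [h]
  have h2 : (if x = w (t + 1) then 1 else 0) =
      ∑ y : V, if x = w (t + 1) ∧ y = w t then 1 else 0 := by
    by_cases h : x = w (t + 1) <;> simp [h]
  rw [h1, h2, lfvRes, lfvRes, ← Finset.sum_add_distrib, ← Finset.sum_add_distrib]
  refine Finset.sum_congr rfl fun y _ => ?_
  rw [lfvCnt_succ]
  have hne := hw.ne
  by_cases ha : x = w t ∧ y = w (t + 1)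
  · obtain ⟨rfl, rfl⟩ := ha
    simp [hw, hne]
    omega
  by_cases hb : x = w (t + 1) ∧ y = w t
  · obtain ⟨rfl, rfl⟩ := hb
    rw [Sym2.eq_swap] at hl
    simp [hw.symm, hne.symm, Sym2.eq_swap (a := w t)]
    omega
  · have : s(w t, w (t + 1)) ≠ s(x, y) := by
      intro h
      rw [Sym2.eq_iff] at h
      rcases h with h | h
      · exact ha ⟨h.1.symm, h.2.symm⟩
      · exact hb ⟨h.2.symm, h.1.symm⟩
    simp [this, ha, hb]

theorem lfvRes_high {V : Type} [Fintype V] (G : SimpleGraph V) (w : ℕ → V) (k : ℕ) (t : ℕ)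
    (hl : k ≤ lfvCnt w s(w t, w (t + 1)) t) (x : V) :
    lfvRes G w k x t = lfvRes G w k x (t + 1) := by
  classical
  refine Finset.sum_congr rfl fun y _ => ?_
  rw [lfvCnt_succ]
  by_cases h : s(w t, w (t + 1)) = s(x, y)
  · rw [h] at hl
    simp only [h, if_true]
    congr 1
    omega
  · simp [h]

open Classical in
theorem lfv_inv {V : Type} [Fintype V] (G : SimpleGraph V) (w : ℕ → V)
    (hw : ∀ t : ℕ, G.Adj (w t) (w (t + 1)))
    (hp : ∀ t : ℕ, ∀ u : V, G.Adj (w t) u →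
      lfvCnt w s(w t, w (t + 1)) t ≤ lfvCnt w s(w t, u) t)
    (k : ℕ) (hk : Even k) (t : ℕ) :
    ∃ o : V, (∀ x, Even (lfvRes G w k x t + (if x = o then 1 else 0)
        + (if x = w t then 1 else 0))) ∧
      ∀ x y z, G.Adj x y → G.Adj x z → lfvCnt w s(x, z) t < k →
        lfvCnt w s(x, y) t ≤ k + if x = o then 1 else 0 := by
  induction t with
  | zero =>
    refine ⟨w 0, fun x => ?_, fun x y z _ _ _ => by simp [lfvCnt]⟩
    have : Even (lfvRes G w k x 0) := by
      refine Finset.even_sum _ fun y _ => ?_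
      split_ifs <;> simp [lfvCnt, hk]
    rw [add_assoc]
    exact this.add (Even.add_self _)
  | succ t ih =>
    obtain ⟨o, h1, h2⟩ := ih
    by_cases hl : lfvCnt w s(w t, w (t + 1)) t < k
    · refine ⟨o, fun x => ?_, fun x y z hy hz hlow => ?_⟩
      · have := h1 x
        rw [lfvRes_low G w k t (hw t) hl x] at this
        rw [Nat.even_iff] at this ⊢
        omega
      · rw [lfvCnt_succ] at hlow ⊢
        have := h2 x y z hy hz (by omega)
        by_cases h : s(w t, w (t + 1)) = s(x, y)
        · rw [h] at hl
          rw [if_pos h]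
          omega
        · rw [if_neg h]
          omega
    · push Not at hl
      have hz : lfvRes G w k (w t) t = 0 := by
        refine Finset.sum_eq_zero fun y _ => ?_
        split_ifs with ha
        · have := hp t y ha
          omega
        · rfl
      have ho : w t = o := by
        by_contra hne
        have := h1 (w t)
        simp [hz, hne] at this
      have hno : ∀ z, G.Adj o z → k ≤ lfvCnt w s(o, z) t := fun z hz => by
        subst ho
        exact hl.trans (hp t z hz)
      refine ⟨w (t + 1), fun x => ?_, fun x y z hy hz hlow => ?_⟩
      · have := h1 x
        rw [lfvRes_high G w k t hl x, ho] at this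
        rw [Nat.even_iff] at this ⊢
        omega
      · rw [lfvCnt_succ] at hlow ⊢
        have hxo : x ≠ o := by
          rintro rfl
          have := hno z hz
          omega
        have := h2 x y z hy hz (by omega)
        rw [if_neg hxo] at this
        by_cases h : s(w t, w (t + 1)) = s(x, y)
        · have hx : x = w (t + 1) := by
            rw [Sym2.eq_iff] at h
            rcases h with h | h
            · exact absurd (h.1.symm.trans ho) hxo
            · exact h.2.symm
          rw [if_pos h, if_pos hx]
          omega
        · rw [if_neg h]
          omega

theorem lfv_local {V : Type} [Fintype V] (G : SimpleGraph V) (w : ℕ → V)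
    (hw : ∀ t : ℕ, G.Adj (w t) (w (t + 1)))
    (hp : ∀ t : ℕ, ∀ u : V, G.Adj (w t) u →
      lfvCnt w s(w t, w (t + 1)) t ≤ lfvCnt w s(w t, u) t)
    (t : ℕ) (x y z : V) (hy : G.Adj x y) (hz : G.Adj x z) :
    lfvCnt w s(x, y) t ≤ lfvCnt w s(x, z) t + 3 := by
  classical
  obtain ⟨k, hk, h1, h2⟩ : ∃ k, Even k ∧ lfvCnt w s(x, z) t < k ∧ k ≤ lfvCnt w s(x, z) t + 2 := by
    rcases Nat.even_or_odd (lfvCnt w s(x, z) t) with h | h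
    · exact ⟨_ + 2, h.add (by decide), by omega, le_rfl⟩
    · exact ⟨_ + 1, h.add_one, by omega, by omega⟩
  obtain ⟨o, -, h⟩ := lfv_inv G w hw hp k hk t
  have := h x y z hy hz h1
  split_ifs at this <;> omega

theorem lfv_global {V : Type} [Fintype V] (G : SimpleGraph V) (w : ℕ → V)
    (hw : ∀ t : ℕ, G.Adj (w t) (w (t + 1)))
    (hp : ∀ t : ℕ, ∀ u : V, G.Adj (w t) u →
      lfvCnt w s(w t, w (t + 1)) t ≤ lfvCnt w s(w t, u) t)
    (t : ℕ) {a v : V} (p : G.Walk a v) (b u : V) (hb : G.Adj a b) (hu : G.Adj v u) :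
    lfvCnt w s(a, b) t ≤ lfvCnt w s(v, u) t + 3 * (p.length + 1) ∧
    lfvCnt w s(v, u) t ≤ lfvCnt w s(a, b) t + 3 * (p.length + 1) := by
  induction p generalizing b with
  | nil =>
    have h1 := lfv_local G w hw hp t _ b u hb hu
    have h2 := lfv_local G w hw hp t _ u b hu hb
    simp; omega
  | @cons a c v h p ih =>
    have h1 := lfv_local G w hw hp t _ b c hb h
    have h2 := lfv_local G w hw hp t _ c b h hb
    have h3 := ih a h.symm hu
    rw [Sym2.eq_swap] at h3
    rw [SimpleGraph.Walk.length_cons]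
    omega

theorem lfvCnt_add {V : Type} (w : ℕ → V) (a b : V) (t N : ℕ) [DecidableEq V] :
    lfvCnt w s(a, b) t + ((Finset.range N).filter
      fun i => (w (t + i), w (t + i + 1)) = (a, b)).card ≤ lfvCnt w s(a, b) (t + N) := by
  classical
  rw [lfvCnt, lfvCnt, Finset.sum_range_add, Finset.card_filter]
  gcongr with i _
  by_cases h : (w (t + i), w (t + i + 1)) = (a, b)
  · rw [Prod.mk.injEq] at h
    simp [← h.1, ← h.2, add_assoc]
  · rw [if_neg h]; exact Nat.zero_le _

theorem lfvCnt_const {V : Type} (w : ℕ → V) (v u : V) (t N : ℕ)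
    (h : ∀ i ≤ N, w (t + i) ≠ v) : lfvCnt w s(v, u) (t + N) = lfvCnt w s(v, u) t := by
  classical
  rw [lfvCnt, lfvCnt, Finset.sum_range_add]
  simp only [Nat.add_eq_left]
  refine Finset.sum_eq_zero fun i hi => ?_
  rw [Finset.mem_range] at hi
  rw [if_neg]
  intro he
  rw [Sym2.eq_iff] at he
  rcases he with he | he
  · exact h i hi.le he.1
  · exact h (i + 1) hi he.2


/-- There is a universal constant `C > 0` such that for every finite connected simple
graph `G` on `n` vertices with maximum degree at most `3` and diameter `d ≥ 1`, and every
walk `w` on `G` following the LFV-e policy, every vertex of `G` is visited in every time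
window of length `C * n * d`. -/
theorem lfv_e_vertex_latency :
    ∃ C : ℝ, 0 < C ∧
      ∀ (V : Type) [Fintype V] (G : SimpleGraph V), G.Connected →
        ∀ n : ℕ, n = Fintype.card V →
        (∀ v : V, {u : V | G.Adj v u}.ncard ≤ 3) →
        -- `d` is the diameter of `G`
        ∀ d : ℕ, IsGreatest {k : ℕ | ∃ u v : V, G.dist u v = k} d → 1 ≤ d →
        ∀ w : ℕ → V,
          -- `w` is a walk on `G`
          (∀ t : ℕ, G.Adj (w t) (w (t + 1))) →
          -- `w` follows the LFV-e policy
          (∀ t : ℕ, ∀ u : V, G.Adj (w t) u →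
            {t' : ℕ | t' < t ∧ s(w t', w (t' + 1)) = s(w t, w (t + 1))}.ncard ≤
              {t' : ℕ | t' < t ∧ s(w t', w (t' + 1)) = s(w t, u)}.ncard) →
          ∀ v : V, ∀ t : ℕ,
            ∃ t' : ℕ, t ≤ t' ∧ (t' : ℝ) ≤ (t : ℝ) + C * n * d ∧ w t' = v := by
  refine ⟨37, by norm_num, ?_⟩
  intro V _ G hG n hn hdeg d hd hd1 w hw hp v t
  classical
  simp only [lfvCnt_ncard] at hp
  by_contra hcon
  push Not at hcon
  have : Nonempty V := ⟨v⟩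
  have hn1 : 1 ≤ n := by rw [hn]; exact Fintype.card_pos
  have hnd : 1 ≤ n * d := Nat.mul_pos hn1 hd1
  set N := 36 * (n * d) + 1 with hN
  have hnov : ∀ i ≤ N, w (t + i) ≠ v := by
    intro i hi
    refine hcon (t + i) (by omega) ?_
    have : (t + i : ℕ) ≤ t + 37 * n * d := by nlinarith
    exact_mod_cast this
  have hdist : ∀ a b, G.dist a b ≤ d := fun a b => hd.2 ⟨a, b, rfl⟩
  obtain ⟨u, hu⟩ : ∃ u, G.Adj v u := by
    have : w t ≠ v := hnov 0 (Nat.zero_le _)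
    obtain ⟨p⟩ := hG.preconnected v (w t)
    cases p with
    | nil => exact absurd rfl this
    | cons h _ => exact ⟨_, h⟩
  have hconst := lfvCnt_const w v u t N hnov
  have hinc : ∀ a b, G.Adj a b → ((Finset.range N).filter
      fun i => (w (t + i), w (t + i + 1)) = (a, b)).card ≤ 12 * d := by
    intro a b hab
    obtain ⟨p, hpl⟩ := hG.exists_walk_length_eq_dist a v
    have h1 := (lfv_global G w hw hp (t + N) p b u hab hu).1
    have h2 := (lfv_global G w hw hp t p b u hab hu).2
    have h3 := lfvCnt_add w a b t N
    have h4 := hdist a v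
    omega
  have hcard : N = ∑ a : V, ∑ b ∈ Finset.univ.filter (fun b => G.Adj a b),
      ((Finset.range N).filter fun i => (w (t + i), w (t + i + 1)) = (a, b)).card := by
    rw [Finset.sum_sigma']
    conv_lhs => rw [← Finset.card_range N]
    rw [Finset.card_eq_sum_card_fiberwise
      (f := fun i => (⟨w (t + i), w (t + i + 1)⟩ : (_ : V) × V))
      (t := Finset.univ.sigma fun a => Finset.univ.filter (fun b => G.Adj a b))]
    · refine Finset.sum_congr rfl fun x _ => ?_
      congr 1
      ext i
      rcases x with ⟨x, y⟩
      simp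
    · intro i _
      simpa using hw (t + i)
  have hle : N ≤ ∑ a : V, 3 * (12 * d) := by
    rw [hcard]
    refine Finset.sum_le_sum fun a _ => ?_
    refine (Finset.sum_le_card_nsmul _ _ (12 * d) fun b hb => hinc a b (by simpa using hb)).trans ?_
    rw [smul_eq_mul]
    refine Nat.mul_le_mul_right _ ?_
    have := hdeg a
    rw [← Set.ncard_coe_finset]
    simpa using this
  rw [Finset.sum_const, smul_eq_mul, Finset.card_univ, ← hn] at hle
  nlinarith
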